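/- Let λ be an n-partition and let τ_0 = (n, n−1, …, 2, 1) be the longest n-permutation. For any reduced word s_{i_t}⋯s_{i_1} for τ_0, the Demazure polynomial d_λ(τ_0;x) = ρ_{i_t}⋯ρ_{i_1}·(x_1^{λ_1}⋯x_n^{λ_n}) equals the Schur polynomial s_λ(x) = Σ_{T ∈ T_λ} x^T, the sum of the weight monomials over all semistandard tableaux of shape λ with entries in [n]. -/

import Mathlib

/-
Common combinatorial set-up for "Tableaux for Key Polynomials, Demazure
Characters, and Atoms" (Proctor–Willis).

Conventions: a box `(j, i)` means column `j`, row `i`, both 1-indexed.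
Partial (remnant) tableaux are encoded by their column-length functions
`c : ℕ → ℕ` (each column of a remnant is a top segment of the original
column), together with the ambient value function `T : ℕ → ℕ → ℕ`.
-/

open scoped BigOperators Classical

noncomputable section

namespace KeyPoly

open MvPolynomial

/-- An `n`-partition `λ = (λ_1, …, λ_n)` with `λ_1 ≥ … ≥ λ_n ≥ 0`,
recorded as a function on `1, …, n`, vanishing beyond `n`. -/
structure NPartition (n : ℕ) where
  part : ℕ → ℕ
  antitone : ∀ ⦃i j : ℕ⦄, 1 ≤ i → i ≤ j → part j ≤ part i
  outside : ∀ i : ℕ, n < i → part i = 0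

variable {n : ℕ}

/-- The column length `ζ_j` of the Young diagram of `λ`. -/
def zeta (lam : NPartition n) (j : ℕ) : ℕ :=
  ((Finset.Icc 1 n).filter fun i => j ≤ lam.part i).card

/-- The box `(j,i)` (column `j`, row `i`) belongs to the diagram of `λ`. -/
def InShape (lam : NPartition n) (j i : ℕ) : Prop :=
  1 ≤ j ∧ 1 ≤ i ∧ i ≤ n ∧ j ≤ lam.part i

/-- The boxes of the diagram of `λ`, as a finite set of pairs (column, row). -/
def boxes (lam : NPartition n) : Finset (ℕ × ℕ) :=
  (Finset.Icc 1 (lam.part 1) ×ˢ Finset.Icc 1 n).filter fun b => b.1 ≤ lam.part b.2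

/-- `T` is a semistandard tableau of shape `λ` with values in `[1,n]`:
rows weakly increase eastward, columns strictly increase southward. -/
def IsSSYT (lam : NPartition n) (T : ℕ → ℕ → ℕ) : Prop :=
  (∀ j i, InShape lam j i → 1 ≤ T j i ∧ T j i ≤ n) ∧
  (∀ j i, InShape lam (j + 1) i → T j i ≤ T (j + 1) i) ∧
  (∀ j i, InShape lam j (i + 1) → T j i < T j (i + 1))

/-- Normalization: the filling vanishes outside the shape. -/
def ZeroOutside (lam : NPartition n) (T : ℕ → ℕ → ℕ) : Prop :=
  ∀ j i, ¬ InShape lam j i → T j i = 0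

/-- `T(l, k+1)`, with the boundary convention `n+1` when `k = ζ_l`. -/
def south (lam : NPartition n) (T : ℕ → ℕ → ℕ) (l k : ℕ) : ℕ :=
  if InShape lam l (k + 1) then T l (k + 1) else n + 1

/-- `T(l+1, k)`, with the boundary convention `n` when `l = λ_k`. -/
def east (lam : NPartition n) (T : ℕ → ℕ → ℕ) (l k : ℕ) : ℕ :=
  if InShape lam (l + 1) k then T (l + 1) k else n

/-- An `n`-permutation: a tuple `(p 1, …, p n)` of distinct entries from `[1,n]`. -/
def IsNPerm (n : ℕ) (p : ℕ → ℕ) : Prop :=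
  Set.BijOn p (Set.Icc 1 n) (Set.Icc 1 n)

/-- The `λ`-key `Y_λ(π)`: column `j` is `π_1, …, π_{ζ_j}` sorted increasingly
(from top to bottom); zero outside the shape. -/
def keyTab (lam : NPartition n) (p : ℕ → ℕ) (j i : ℕ) : ℕ :=
  if InShape lam j i then
    (((Finset.Icc 1 (zeta lam j)).image p).sort (· ≤ ·)).getD (i - 1) 0
  else 0

/-- A semistandard `T` is a key if the values of each column contain the
values of every column to its east. -/
def colSet (lam : NPartition n) (T : ℕ → ℕ → ℕ) (j : ℕ) : Finset ℕ :=
  (Finset.Icc 1 (zeta lam j)).image (T j)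

def IsKey (lam : NPartition n) (T : ℕ → ℕ → ℕ) : Prop :=
  ∀ j j' : ℕ, 1 ≤ j → j ≤ j' → j' ≤ lam.part 1 → colSet lam T j' ⊆ colSet lam T j

/-! ### The (right) scanning method -/

/-- The next column of the scanning path: the earliest column `h' > h`
(up to `maxCol`) whose column bottom in the remnant `c` is nonempty and has
value weakly larger than the bottom value of column `h`. -/
def nextCol (T : ℕ → ℕ → ℕ) (c : ℕ → ℕ) (maxCol h : ℕ) : Option ℕ :=
  (List.range' (h + 1) (maxCol - h)).find?
    (fun h' => decide (0 < c h' ∧ T h (c h) ≤ T h' (c h')))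

/-- Columns of the scanning path (EWIS of column bottoms) starting at column `h`,
with explicit fuel. -/
def pathColsAux (T : ℕ → ℕ → ℕ) (c : ℕ → ℕ) (maxCol : ℕ) : ℕ → ℕ → List ℕ
  | 0, h => [h]
  | fuel + 1, h =>
    match nextCol T c maxCol h with
    | none => [h]
    | some h' => h :: pathColsAux T c maxCol fuel h'

/-- Columns of the scanning path starting at the bottom of column `j` of the
remnant with column lengths `c`. -/
def pathCols (T : ℕ → ℕ → ℕ) (c : ℕ → ℕ) (maxCol j : ℕ) : List ℕ :=
  pathColsAux T c maxCol maxCol j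

/-- Remove the scanning path starting in column `j` from the remnant `c`. -/
def removePath (T : ℕ → ℕ → ℕ) (c : ℕ → ℕ) (maxCol j : ℕ) : ℕ → ℕ :=
  fun h => if h ∈ pathCols T c maxCol j then c h - 1 else c h

/-- Iterate path removal `r` times, always starting from column `j`. -/
def remnantIter (T : ℕ → ℕ → ℕ) (c0 : ℕ → ℕ) (maxCol j : ℕ) : ℕ → ℕ → ℕ
  | 0 => c0
  | r + 1 => removePath T (remnantIter T c0 maxCol j r) maxCol j

/-- Column lengths of the remnant tableau `T^{(j;i)}`. -/
def remnant (lam : NPartition n) (T : ℕ → ℕ → ℕ) (j i : ℕ) : ℕ → ℕ :=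
  remnantIter T (zeta lam) (lam.part 1) j (zeta lam j - i)

/-- The scanning path `P(T; j, i)`, recorded by its list of columns. -/
def scanPath (lam : NPartition n) (T : ℕ → ℕ → ℕ) (j i : ℕ) : List ℕ :=
  pathCols T (remnant lam T j i) (lam.part 1) j

/-- The scanning value `S(T; j, i)`: the last value of the EWIS from `(j,i)`. -/
def scanValue (lam : NPartition n) (T : ℕ → ℕ → ℕ) (j i : ℕ) : ℕ :=
  T ((scanPath lam T j i).getLastD j)
    (remnant lam T j i ((scanPath lam T j i).getLastD j))

/-- The box `(l,k)` lies on the scanning path `P(T; j, i)`. -/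
def InScanPath (lam : NPartition n) (T : ℕ → ℕ → ℕ) (j i l k : ℕ) : Prop :=
  l ∈ scanPath lam T j i ∧ k = remnant lam T j i l

/-- `m(U)` where `U` is the remnant with column lengths `c` restricted to the
columns `l+1, …, maxCol`:  the maximum of the column-bottom values, with the
convention `m((())) = 1` for the empty tableau. -/
def mEast (T : ℕ → ℕ → ℕ) (c : ℕ → ℕ) (maxCol l : ℕ) : ℕ :=
  max 1 (((Finset.Icc (l + 1) maxCol).filter fun h => 0 < c h).sup fun h => T h (c h))

/-! ### The condition sets A, C, and B -/

/-- The set `A_λ(T, π; l, k)`. -/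
def Aset (lam : NPartition n) (T : ℕ → ℕ → ℕ) (p : ℕ → ℕ) (l k : ℕ) : Set ℕ :=
  if keyTab lam p l k < mEast T (remnant lam T l k) (lam.part 1) l then (∅ : Set ℕ)
  else Set.Icc k (min (keyTab lam p l k) (min (south lam T l k - 1) (east lam T l k)))

/-- The set `C_λ(T, π; l, k)`. -/
def Cset (lam : NPartition n) (T : ℕ → ℕ → ℕ) (p : ℕ → ℕ) (l k : ℕ) : Set ℕ :=
  if l = lam.part 1 then {keyTab lam p l k}
  else if keyTab lam p l k < mEast T (remnant lam T l k) (lam.part 1) l then (∅ : Set ℕ)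
  else if mEast T (remnant lam T l k) (lam.part 1) l = keyTab lam p l k then
    Set.Icc k (min (keyTab lam p l k) (min (south lam T l k - 1) (east lam T l k)))
  else {keyTab lam p l k} ∩ Set.Icc k (min (south lam T l k - 1) (east lam T l k))

/-- The row index `a(l,k;j)`:  the `i` with `(l-1,k) ∈ P(T;j,i)`
(convention `a(l,k;l) = k`). -/
def aIdx (lam : NPartition n) (T : ℕ → ℕ → ℕ) (l k j : ℕ) : ℕ :=
  if j = l then k
  else ((Finset.Icc 1 (zeta lam j)).filter fun i => InScanPath lam T j i (l - 1) k).sup id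

/-- The row index `b(l,k;j)`:  the `i` with `(l,k+1) ∈ P(T;j,i)` when `k < ζ_l`,
and `ζ_j + 1` when `k = ζ_l` (convention `b(l,k;l) = k+1`). -/
def bIdx (lam : NPartition n) (T : ℕ → ℕ → ℕ) (l k j : ℕ) : ℕ :=
  if j = l then k + 1
  else if k = zeta lam l then zeta lam j + 1
  else ((Finset.Icc 1 (zeta lam j)).filter fun i => InScanPath lam T j i l (k + 1)).sup id

/-- `E(l,k;j,i)`:  the value of `T` at the box `(h,m)` of `P(T;j,i)` with `h < l`
maximal (convention `E(l,k;l,k) = k`). -/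
def Epath (lam : NPartition n) (T : ℕ → ℕ → ℕ) (l k j i : ℕ) : ℕ :=
  if j = l then k
  else
    T (((scanPath lam T j i).filter fun h => decide (h < l)).foldr max 0)
      (remnant lam T j i (((scanPath lam T j i).filter fun h => decide (h < l)).foldr max 0))

/-- The set `B_λ(T, π; l, k) = ⋂_{j=1}^{l} ⋃_{i=a(j)}^{b(j)-1} [E(l,k;j,i), Y_λ(π)(j,i)]`. -/
def Bset (lam : NPartition n) (T : ℕ → ℕ → ℕ) (p : ℕ → ℕ) (l k : ℕ) : Set ℕ :=
  {v | ∀ j, 1 ≤ j → j ≤ l →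
    ∃ i, aIdx lam T l k j ≤ i ∧ i + 1 ≤ bIdx lam T l k j ∧
      Epath lam T l k j i ≤ v ∧ v ≤ keyTab lam p j i}

/-! ### The left scanning method -/

/-- The largest row `r ≤ c j` of column `j` whose value is at most `x`. -/
def maxRow (T : ℕ → ℕ → ℕ) (c : ℕ → ℕ) (j x : ℕ) : ℕ :=
  ((Finset.Icc 1 (c j)).filter fun r => T j r ≤ x).sup id

/-- The rows of the maximizing weakly decreasing sequence through columns
`j, j-1, …, 1` with initial bound `x`, in a remnant with column lengths `c`. -/
def leftRows (T : ℕ → ℕ → ℕ) (c : ℕ → ℕ) : ℕ → ℕ → List ℕ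
  | 0, _ => []
  | j + 1, x => maxRow T c (j + 1) x :: leftRows T c j (T (j + 1) (maxRow T c (j + 1) x))

/-- The column-1 value at the end of the left scanning path originating at `(j, r)`. -/
def leftEndVal (T : ℕ → ℕ → ℕ) (c : ℕ → ℕ) (j r : ℕ) : ℕ :=
  T 1 ((leftRows T c j (T j r)).getLastD 0)

/-- Remove the left scanning path originating at `(l, c l)`, together with
all values beneath it, from the remnant `c`. -/
def leftRemovePath (T : ℕ → ℕ → ℕ) (c : ℕ → ℕ) (l : ℕ) : ℕ → ℕ :=
  fun j =>
    if 1 ≤ j ∧ j ≤ l then (leftRows T c l (T l (c l))).getD (l - j) 0 - 1 else c j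

/-- Iterate left-path removal `r` times (always for column `l`). -/
def leftRemnantIter (T : ℕ → ℕ → ℕ) (c0 : ℕ → ℕ) (l : ℕ) : ℕ → ℕ → ℕ
  | 0 => c0
  | r + 1 => leftRemovePath T (leftRemnantIter T c0 l r) l

/-- Column lengths of the left remnant used to compute `M(T; l, i)`:
`T` restricted to its first `l` columns with the left scanning paths
originating at `(l, ζ_l), …, (l, i+1)` (and everything beneath them) removed. -/
def leftRemnant (lam : NPartition n) (T : ℕ → ℕ → ℕ) (l i : ℕ) : ℕ → ℕ :=
  leftRemnantIter T (zeta lam) l (zeta lam l - i)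

/-- The left scanning value `M(T; l, i)`. -/
def leftScanValue (lam : NPartition n) (T : ℕ → ℕ → ℕ) (l i : ℕ) : ℕ :=
  leftEndVal T (leftRemnant lam T l i) l i

/-! ### The condition sets F and G -/

/-- The set `F_λ(T, σ; l, k)`. -/
def Fset (lam : NPartition n) (T : ℕ → ℕ → ℕ) (sg : ℕ → ℕ) (l k : ℕ) : Set ℕ :=
  if l = 1 then Set.Icc (keyTab lam sg 1 k) (south lam T 1 k - 1)
  else
    let U := leftRemnant lam T l k
    let q := maxRow T U (l - 1) (south lam T l k - 1)
    let P := (Finset.Icc 1 q).filter fun h => keyTab lam sg l k ≤ leftEndVal T U (l - 1) h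
    if hP : P.Nonempty then Set.Icc (T (l - 1) (P.min' hP)) (south lam T l k - 1)
    else (∅ : Set ℕ)

/-- The set `G_λ(T, σ; l, k)`. -/
def Gset (lam : NPartition n) (T : ℕ → ℕ → ℕ) (sg : ℕ → ℕ) (l k : ℕ) : Set ℕ :=
  if l = 1 then {keyTab lam sg 1 k}
  else
    let U := leftRemnant lam T l k
    let q := maxRow T U (l - 1) (south lam T l k - 1)
    let P := (Finset.Icc 1 q).filter fun h => leftEndVal T U (l - 1) h = keyTab lam sg l k
    if hP : P.Nonempty then
      Set.Icc (T (l - 1) (P.min' hP))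
        (min ((if P.max' hP + 1 ≤ U (l - 1) then T (l - 1) (P.max' hP + 1) else n + 1) - 1)
          (south lam T l k - 1))
    else (∅ : Set ℕ)

/-! ### Polynomials, divided differences, words -/

/-- Polynomials in the variables `X 1, …, X n` (indexed by `ℕ`) over `ℚ`. -/
abbrev Poly : Type := MvPolynomial ℕ ℚ

/-- The action of `s_i` on polynomials: interchange `x_i` and `x_{i+1}`. -/
def sOp (i : ℕ) (P : Poly) : Poly := rename (Equiv.swap i (i + 1)) P

/-- The divided difference operator
`ρ_i = (x_i - x_{i+1})⁻¹ ∘ (1 - s_i) ∘ x_i`, defined as the unique polynomial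
`Q` with `(x_i - x_{i+1}) Q = x_i P - s_i (x_i P)`. -/
def rhoOp (i : ℕ) (P : Poly) : Poly :=
  if h : ∃ Q : Poly, (X i - X (i + 1)) * Q = X i * P - sOp i (X i * P) then h.choose
  else 0

/-- The operator `ρ̄_i := ρ_i - 1`. -/
def rhoBarOp (i : ℕ) (P : Poly) : Poly := rhoOp i P - P

/-- Apply operators indexed by a word `[i_t, …, i_1]`, rightmost first:
`applyOps f [i_t, …, i_1] P = f i_t (⋯ (f i_1 P))`. -/
def applyOps (f : ℕ → Poly → Poly) : List ℕ → Poly → Poly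
  | [], P => P
  | i :: w, P => f i (applyOps f w P)

/-- The monomial `x_1^{λ_1} ⋯ x_n^{λ_n}`. -/
def lamMonomial (lam : NPartition n) : Poly :=
  ∏ i ∈ Finset.Icc 1 n, X i ^ lam.part i

/-- The weight monomial `x^T = ∏ x_i^{c_i}` of the filling `T`. -/
def weight (lam : NPartition n) (T : ℕ → ℕ → ℕ) : Poly :=
  ∏ b ∈ boxes lam, X (T b.1 b.2)

/-- The simple reflection `s_i` acting by value. -/
def swapVal (i v : ℕ) : ℕ := if v = i then i + 1 else if v = i + 1 then i else v

/-- The permutation `s_{i_t} ⋯ s_{i_1}.(1, 2, …, n)` obtained by applying the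
word `w = [i_t, …, i_1]` (rightmost letter first, each acting by value) to the
identity. -/
def permOfWord (w : List ℕ) : ℕ → ℕ := w.foldr (fun i f => swapVal i ∘ f) id

/-- `w` is a word in letters `s_1, …, s_{n-1}` producing `π` from `(1, …, n)`. -/
def WordFor (n : ℕ) (w : List ℕ) (p : ℕ → ℕ) : Prop :=
  (∀ i ∈ w, 1 ≤ i ∧ i + 1 ≤ n) ∧ ∀ t, 1 ≤ t → t ≤ n → permOfWord w t = p t

/-- `w` is a reduced word for `π`: it produces `π` with minimal length. -/
def IsReducedWord (n : ℕ) (w : List ℕ) (p : ℕ → ℕ) : Prop :=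
  WordFor n w p ∧ ∀ w' : List ℕ, WordFor n w' p → w.length ≤ w'.length

/-- The atom `c_λ(π;x) = ρ̄_{i_t} ⋯ ρ̄_{i_1} . x_1^{λ_1} ⋯ x_n^{λ_n}`, computed
from a choice of reduced word for `π` (it is independent of this choice). -/
def atomPoly (lam : NPartition n) (p : ℕ → ℕ) : Poly :=
  if h : ∃ w : List ℕ, IsReducedWord n w p then
    applyOps rhoBarOp h.choose (lamMonomial lam)
  else 0

/-! ### `S_n^λ` -/

/-- The set `Q_λ` of distinct column lengths of `λ`. -/
def Qset (lam : NPartition n) : Finset ℕ := (Finset.Icc 1 (lam.part 1)).image (zeta lam)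

/-- `π ∈ S_n^λ`: an `n`-permutation increasing on each block `[q_{r-1}+1, q_r]`
cut out by the column lengths of `λ` (equivalently, `π_i < π_j` whenever
`i < j` and no element of `Q_λ` lies in `[i, j)`). -/
def InSnLam (lam : NPartition n) (p : ℕ → ℕ) : Prop :=
  IsNPerm n p ∧ ∀ i j, 1 ≤ i → i < j → j ≤ n →
    (∀ q ∈ Qset lam, q < i ∨ j ≤ q) → p i < p j

end KeyPoly

/-!
Let `F = ρ_{i_t} ⋯ ρ_{i_1} x^λ`, let `δ = (n - 1, …, 1, 0)`, and let `A` be antisymmetrization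
over `S_n`.

Every `i` is a descent of `τ_0`, so commutation and braid relations, which the `ρ_i` also satisfy,
move any letter `i` to the front of the word; since `s_i ρ_i = ρ_i`, the polynomial `F` is
symmetric. On the other hand `A (x^δ ρ_i P) = A (x^δ P)`: writing `ρ_i P = P + x_{i+1} ∂_i P`,
both `x^δ x_{i+1}` and `∂_i P` are invariant under `s_i`, so `A` kills their product. Therefore
`A (x^δ) F = A (x^δ F) = A (x^{λ+δ})`, that is, `F` is the quotient of alternants
`a_{λ+δ} / a_δ`.

This quotient is `s_λ` because both obey the same recursion on the number of variables, a sum over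
the partitions interlacing `λ`: for `s_λ` by deleting the largest entry from a tableau, for the
alternants by column operations that clear the last row of `a_{λ+δ}` off the diagonal.
-/

namespace KeyPoly

open MvPolynomial

section SimpleTranspositions

/-- The simple transposition `s_i = (i, i + 1)`, as a permutation of `ℕ`. -/
def simpleSwap (i : ℕ) : Equiv.Perm ℕ := Equiv.swap i (i + 1)

/-- A sequence in a monoid satisfying the commutation and braid relations of the simple
transpositions. -/
structure IsBraided {M : Type*} [Monoid M] (f : ℕ → M) : Prop where
  comm : ∀ i j, i + 1 < j → f i * f j = f j * f i
  braid : ∀ i, f i * f (i + 1) * f i = f (i + 1) * f i * f (i + 1)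

theorem IsBraided.mul_comm_of_far {M : Type*} [Monoid M] {f : ℕ → M} (hf : IsBraided f)
    {i j : ℕ} (h : i + 1 < j ∨ j + 1 < i) : f i * f j = f j * f i :=
  h.elim (hf.comm i j) fun h => (hf.comm j i h).symm

theorem IsBraided.braid_of_adjacent {M : Type*} [Monoid M] {f : ℕ → M} (hf : IsBraided f)
    {i j : ℕ} (h : i + 1 = j ∨ j + 1 = i) : f i * (f j * f i) = f j * (f i * f j) := by
  rcases h with rfl | rfl
  · simpa only [mul_assoc] using hf.braid i
  · simpa only [mul_assoc] using (hf.braid j).symm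

theorem simpleSwap_mul_self (i : ℕ) : simpleSwap i * simpleSwap i = 1 :=
  Equiv.swap_mul_self i (i + 1)

theorem isBraided_simpleSwap : IsBraided simpleSwap where
  comm i j h := by
    have hnodup : [i, i + 1, j, j + 1].Nodup := by grind
    exact (Equiv.Perm.disjoint_swap_swap hnodup).commute.eq
  braid i := by
    ext k
    simp only [simpleSwap, Equiv.Perm.mul_apply, Equiv.swap_apply_def]
    grind

end SimpleTranspositions

section DescentWords

/-- `i` is a descent of the permutation `τ`. -/
def IsDescent (τ : Equiv.Perm ℕ) (i : ℕ) : Prop := τ (i + 1) < τ i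

theorem isDescent_mul_simpleSwap_self {τ : Equiv.Perm ℕ} {i : ℕ} :
    IsDescent (τ * simpleSwap i) i ↔ ¬ IsDescent τ i := by
  have : τ i ≠ τ (i + 1) := τ.injective.ne (by lia)
  simp only [IsDescent, simpleSwap, Equiv.Perm.mul_apply, Equiv.swap_apply_left,
    Equiv.swap_apply_right]
  lia

theorem isDescent_mul_simpleSwap_of_far {τ : Equiv.Perm ℕ} {i j : ℕ}
    (h : i + 1 < j ∨ j + 1 < i) : IsDescent (τ * simpleSwap j) i ↔ IsDescent τ i := by
  simp only [IsDescent, simpleSwap, Equiv.Perm.mul_apply]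
  rw [Equiv.swap_apply_of_ne_of_ne, Equiv.swap_apply_of_ne_of_ne] <;> lia

theorem IsDescent.mul_simpleSwap_of_adjacent {τ : Equiv.Perm ℕ} {i j : ℕ}
    (h : i + 1 = j ∨ j + 1 = i) (hi : IsDescent τ i) (hj : IsDescent τ j) :
    IsDescent (τ * simpleSwap j) i := by
  rcases h with rfl | rfl <;> grind [IsDescent, simpleSwap, Equiv.Perm.mul_apply]

theorem IsDescent.mul_simpleSwap_mul_simpleSwap {τ : Equiv.Perm ℕ} {i j : ℕ}
    (h : i + 1 = j ∨ j + 1 = i) (hi : IsDescent τ i) :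
    IsDescent (τ * simpleSwap j * simpleSwap i) j := by
  rcases h with rfl | rfl <;> grind [IsDescent, simpleSwap, Equiv.Perm.mul_apply]

/-- `w = [i_t, …, i_1]` sorts `τ`: multiplying `τ` on the right by `s_{i_t}, …, s_{i_1}` in turn
removes a descent at each step and ends at the identity. -/
inductive IsDescentWord : Equiv.Perm ℕ → List ℕ → Prop
  | nil : IsDescentWord 1 []
  | cons {τ : Equiv.Perm ℕ} {i : ℕ} {w : List ℕ} :
      IsDescent τ i → IsDescentWord (τ * simpleSwap i) w → IsDescentWord τ (i :: w)

theorem IsDescentWord.exchange {M : Type*} [Monoid M] {f : ℕ → M} (hf : IsBraided f)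
    {τ : Equiv.Perm ℕ} {w : List ℕ} (hw : IsDescentWord τ w) {i : ℕ} (hi : IsDescent τ i) :
    ∃ u, IsDescentWord (τ * simpleSwap i) u ∧ u.length + 1 = w.length ∧ i :: u ⊆ w ∧
      (w.map f).prod = f i * (u.map f).prod := by
  induction hlen : w.length using Nat.strong_induction_on generalizing τ w i with
  | _ N IH =>
  subst hlen
  rcases hw with _ | @⟨_, j, v, hj, hv⟩
  · exact absurd hi (by simp [IsDescent])
  rcases eq_or_ne i j with rfl | hij
  · exact ⟨v, hv, rfl, List.Subset.refl _, by simp⟩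
  by_cases hfar : i + 1 < j ∨ j + 1 < i
  · obtain ⟨u, hu, hlen, hsub, hprod⟩ := IH _ (by simp) hv
      ((isDescent_mul_simpleSwap_of_far hfar).2 hi) rfl
    refine ⟨j :: u, .cons ((isDescent_mul_simpleSwap_of_far hfar.symm).2 hj) ?_, ?_, ?_, ?_⟩
    · rwa [mul_assoc, isBraided_simpleSwap.mul_comm_of_far hfar, ← mul_assoc]
    · simp [hlen]
    · grind
    · simp only [List.map_cons, List.prod_cons, hprod]
      rw [← mul_assoc, ← mul_assoc, hf.mul_comm_of_far hfar]
  · have hadj : i + 1 = j ∨ j + 1 = i := by lia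
    obtain ⟨v', hv', hlen', hsub', hprod'⟩ := IH _ (by simp) hv
      (hi.mul_simpleSwap_of_adjacent hadj hj) rfl
    obtain ⟨x, hx, hlen, hsub, hprod⟩ := IH _ (by simp only [List.length_cons]; lia) hv'
      (hi.mul_simpleSwap_mul_simpleSwap hadj) rfl
    refine ⟨j :: i :: x, .cons (hj.mul_simpleSwap_of_adjacent hadj.symm hi)
      (.cons (hj.mul_simpleSwap_mul_simpleSwap hadj.symm) ?_), ?_, ?_, ?_⟩
    · have := isBraided_simpleSwap.braid_of_adjacent hadj
      simp only [mul_assoc] at hx ⊢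
      rwa [this]
    · simp only [List.length_cons]
      lia
    · grind
    · simp only [List.map_cons, List.prod_cons, hprod', hprod]
      simpa only [mul_assoc] using
        congrArg (· * (x.map f).prod) (hf.braid_of_adjacent hadj.symm)

/-- The permutation `s_{i_t} ⋯ s_{i_1}` of the word `w = [i_t, …, i_1]`. -/
def wordPerm (w : List ℕ) : Equiv.Perm ℕ := (w.map simpleSwap).prod

theorem wordPerm_cons (i : ℕ) (w : List ℕ) : wordPerm (i :: w) = simpleSwap i * wordPerm w := rfl

theorem permOfWord_eq_wordPerm (w : List ℕ) : permOfWord w = wordPerm w := by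
  induction w with
  | nil => rfl
  | cons i w ih =>
    funext t
    have hswap : swapVal i = simpleSwap i := funext fun v => (Equiv.swap_apply_def i (i + 1) v).symm
    rw [wordPerm_cons, Equiv.Perm.mul_apply, ← ih, ← hswap]
    rfl

theorem isDescentWord_or_exists_shorter (w : List ℕ) :
    IsDescentWord (wordPerm w)⁻¹ w ∨
      ∃ w', w'.length < w.length ∧ w' ⊆ w ∧ wordPerm w' = wordPerm w := by
  induction w with
  | nil => exact .inl .nil
  | cons i w ih =>
    rcases ih with hw | ⟨w', hlen, hsub, hperm⟩
    · by_cases hi : IsDescent (wordPerm w)⁻¹ i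
      · obtain ⟨u, -, hlen, hsub, hprod⟩ := hw.exchange isBraided_simpleSwap hi
        refine .inr ⟨u, by simp only [List.length_cons]; lia, by grind, ?_⟩
        change _ = simpleSwap i * _ at hprod
        rw [wordPerm_cons, wordPerm, wordPerm, hprod, ← mul_assoc, simpleSwap_mul_self, one_mul]
      · have hinv : (wordPerm (i :: w))⁻¹ = (wordPerm w)⁻¹ * simpleSwap i := by
          rw [wordPerm_cons, mul_inv_rev, simpleSwap, Equiv.swap_inv]
        refine .inl (hinv ▸ .cons (isDescent_mul_simpleSwap_self.2 hi) ?_)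
        rwa [mul_assoc, simpleSwap_mul_self, mul_one]
    · refine .inr ⟨i :: w', by simpa using hlen, List.cons_subset_cons i hsub, ?_⟩
      rw [wordPerm_cons, hperm, wordPerm_cons]

theorem IsReducedWord.isDescentWord {n : ℕ} {w : List ℕ} {p : ℕ → ℕ} (hw : IsReducedWord n w p) :
    IsDescentWord (wordPerm w)⁻¹ w := by
  refine (isDescentWord_or_exists_shorter w).resolve_right ?_
  rintro ⟨w', hlen, hsub, hperm⟩
  obtain ⟨⟨hletters, heval⟩, hmin⟩ := hw
  refine (hmin w' ⟨fun i hi => hletters i (hsub hi), ?_⟩).not_gt hlen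
  rwa [permOfWord_eq_wordPerm, hperm, ← permOfWord_eq_wordPerm]

theorem IsReducedWord.isDescent_of_longest {n : ℕ} {w : List ℕ}
    (hw : IsReducedWord n w (fun t => n + 1 - t)) {i : ℕ} (hi : 1 ≤ i) (hin : i + 1 ≤ n) :
    IsDescent (wordPerm w)⁻¹ i := by
  have hinv {t : ℕ} (ht : 1 ≤ t) (htn : t ≤ n) : (wordPerm w)⁻¹ t = n + 1 - t := by
    rw [Equiv.Perm.inv_eq_iff_eq, ← permOfWord_eq_wordPerm, hw.1.2 _ (by lia) (by lia)]
    lia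
  rw [IsDescent, hinv hi (by lia), hinv (by lia) hin]
  lia

end DescentWords

section DemazureOperators

theorem sOp_mul (i : ℕ) (P Q : Poly) : sOp i (P * Q) = sOp i P * sOp i Q := map_mul _ P Q

theorem sOp_pow (i : ℕ) (P : Poly) (m : ℕ) : sOp i (P ^ m) = sOp i P ^ m := map_pow _ P m

theorem sOp_prod {ι : Type*} (i : ℕ) (s : Finset ι) (P : ι → Poly) :
    sOp i (∏ a ∈ s, P a) = ∏ a ∈ s, sOp i (P a) := map_prod _ P s

theorem sOp_sub (i : ℕ) (P Q : Poly) : sOp i (P - Q) = sOp i P - sOp i Q := map_sub _ P Q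

theorem sOp_X (i k : ℕ) : sOp i (X k) = X (simpleSwap i k) := rename_X _ k

theorem sOp_X_self (i : ℕ) : sOp i (X i) = X (i + 1) := by
  rw [sOp_X, simpleSwap, Equiv.swap_apply_left]

theorem sOp_X_succ (i : ℕ) : sOp i (X (i + 1)) = X i := by
  rw [sOp_X, simpleSwap, Equiv.swap_apply_right]

theorem sOp_X_of_ne {i k : ℕ} (h : k ≠ i) (h' : k ≠ i + 1) : sOp i (X k) = X k := by
  rw [sOp_X, simpleSwap, Equiv.swap_apply_of_ne_of_ne h h']

theorem sOp_sOp (i j : ℕ) (P : Poly) : sOp i (sOp j P) = rename (simpleSwap i * simpleSwap j) P :=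
  rename_rename _ _ P

theorem sOp_sOp_self (i : ℕ) (P : Poly) : sOp i (sOp i P) = P := by
  rw [sOp_sOp, simpleSwap_mul_self, Equiv.Perm.coe_one, rename_id_apply]

theorem sOp_comm {i j : ℕ} (h : i + 1 < j) (P : Poly) : sOp i (sOp j P) = sOp j (sOp i P) := by
  rw [sOp_sOp, sOp_sOp, isBraided_simpleSwap.comm i j h]

theorem sOp_braid (i : ℕ) (P : Poly) :
    sOp i (sOp (i + 1) (sOp i P)) = sOp (i + 1) (sOp i (sOp (i + 1) P)) := by
  have hword (j k l : ℕ) : sOp j (sOp k (sOp l P)) =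
      rename (simpleSwap j * (simpleSwap k * simpleSwap l)) P := by
    rw [sOp_sOp k l]
    exact rename_rename _ _ P
  rw [hword, hword, ← mul_assoc, ← mul_assoc, isBraided_simpleSwap.braid]

theorem X_sub_X_ne_zero {i j : ℕ} (h : i ≠ j) : (X i - X j : Poly) ≠ 0 :=
  sub_ne_zero.2 (X_injective.ne h)

theorem X_sub_X_dvd_sub_sOp (i : ℕ) (P : Poly) : (X i - X (i + 1) : Poly) ∣ P - sOp i P := by
  rw [← Ideal.mem_span_singleton, ← Ideal.Quotient.eq]
  -- Modulo `X i - X (i + 1)`, the substitution `s_i` becomes the identity.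
  let π := Ideal.Quotient.mkₐ ℚ (Ideal.span {(X i - X (i + 1) : Poly)})
  have hX : π (X i) = π (X (i + 1)) :=
    Ideal.Quotient.eq.2 (Ideal.mem_span_singleton_self _)
  have hπ : π = π.comp (rename (Equiv.swap i (i + 1))) := by
    refine MvPolynomial.algHom_ext fun k => ?_
    rw [AlgHom.comp_apply, rename_X, Equiv.swap_apply_def]
    split_ifs with h h'
    · rw [h, hX]
    · rw [h', hX]
    · rfl
  exact DFunLike.congr_fun hπ P

theorem rhoOp_spec (i : ℕ) (P : Poly) :
    (X i - X (i + 1)) * rhoOp i P = X i * P - X (i + 1) * sOp i P := by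
  have hdvd : ∃ Q : Poly, (X i - X (i + 1)) * Q = X i * P - sOp i (X i * P) :=
    (X_sub_X_dvd_sub_sOp i (X i * P)).imp fun _ hQ => hQ.symm
  rw [rhoOp, dif_pos hdvd, hdvd.choose_spec, sOp_mul, sOp_X_self]

theorem sOp_rhoOp (i : ℕ) (P : Poly) : sOp i (rhoOp i P) = rhoOp i P := by
  have hspec := rhoOp_spec i P
  have hswap := congrArg (sOp i) hspec
  simp only [sOp_mul, sOp_sub, sOp_X_self, sOp_X_succ, sOp_sOp_self] at hswap
  apply mul_left_cancel₀ (X_sub_X_ne_zero i.lt_succ_self.ne)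
  linear_combination -hswap - hspec

/-- The polynomial `Q` is the ordinary divided difference of `P`. -/
theorem exists_rhoOp_eq_add (i : ℕ) (P : Poly) :
    ∃ Q : Poly, sOp i Q = Q ∧ rhoOp i P = P + X (i + 1) * Q := by
  obtain ⟨Q, hQ⟩ := X_sub_X_dvd_sub_sOp i P
  have hne : (X i - X (i + 1) : Poly) ≠ 0 := X_sub_X_ne_zero i.lt_succ_self.ne
  refine ⟨Q, mul_left_cancel₀ hne ?_, mul_left_cancel₀ hne ?_⟩
  · have hswap := congrArg (sOp i) hQ
    simp only [sOp_mul, sOp_sub, sOp_X_self, sOp_X_succ, sOp_sOp_self] at hswap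
    linear_combination hswap + hQ
  · rw [rhoOp_spec]
    linear_combination X (i + 1) * hQ

theorem rhoOp_comm {i j : ℕ} (h : i + 1 < j) (P : Poly) :
    rhoOp i (rhoOp j P) = rhoOp j (rhoOp i P) := by
  have hji := congrArg (sOp j) (rhoOp_spec i P)
  have hij := congrArg (sOp i) (rhoOp_spec j P)
  simp only [sOp_mul, sOp_sub, sOp_X_of_ne (show i ≠ j by lia) (show i ≠ j + 1 by lia),
    sOp_X_of_ne (show i + 1 ≠ j by lia) (show i + 1 ≠ j + 1 by lia)] at hji
  simp only [sOp_mul, sOp_sub, sOp_X_of_ne (show j ≠ i by lia) (show j ≠ i + 1 by lia),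
    sOp_X_of_ne (show j + 1 ≠ i by lia) (show j + 1 ≠ i + 1 by lia), sOp_comm h] at hij
  apply mul_left_cancel₀ (mul_ne_zero (X_sub_X_ne_zero i.lt_succ_self.ne)
    (X_sub_X_ne_zero j.lt_succ_self.ne))
  linear_combination
    (X j - X (j + 1)) * rhoOp_spec i (rhoOp j P) + X i * rhoOp_spec j P - X (i + 1) * hij
      - (X i - X (i + 1)) * rhoOp_spec j (rhoOp i P) - X j * rhoOp_spec i P + X (j + 1) * hji

/-- The discriminant `Δ = (x - y) (y - z) (x - z)` of the three consecutive variables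
`x, y, z = x_i, x_{i+1}, x_{i+2}`: a common denominator for the operators in the braid relation. -/
def braidDenom (i : ℕ) : Poly :=
  (X i - X (i + 1)) * (X (i + 1) - X (i + 2)) * (X i - X (i + 2))

theorem braidDenom_ne_zero (i : ℕ) : braidDenom i ≠ 0 :=
  mul_ne_zero (mul_ne_zero (X_sub_X_ne_zero (by lia)) (X_sub_X_ne_zero (by lia)))
    (X_sub_X_ne_zero (by lia))

theorem braidDenom_mul_rhoOp_left (i : ℕ) (P : Poly) :
    braidDenom i * rhoOp i (rhoOp (i + 1) (rhoOp i P)) =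
      X i ^ 2 * X (i + 1) * P - X i * X (i + 1) ^ 2 * sOp i P
        - X i ^ 2 * X (i + 2) * sOp (i + 1) P + X i * X (i + 2) ^ 2 * sOp (i + 1) (sOp i P)
        + X (i + 1) ^ 2 * X (i + 2) * sOp i (sOp (i + 1) P)
        - X (i + 1) * X (i + 2) ^ 2 * sOp i (sOp (i + 1) (sOp i P)) := by
  set A := rhoOp i P with hA
  set B := rhoOp (i + 1) A with hB
  have hAspec := rhoOp_spec i P
  have htA := congrArg (sOp (i + 1)) hAspec
  have hBspec := rhoOp_spec (i + 1) A
  have hsB := congrArg (sOp i) hBspec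
  rw [← hA] at hAspec htA
  rw [← hB] at hBspec hsB
  simp only [sOp_mul, sOp_sub, sOp_X_self,
    sOp_X_of_ne (show i ≠ i + 1 by lia) (show i ≠ i + 1 + 1 by lia)] at htA
  have hstA := congrArg (sOp i) htA
  simp only [sOp_mul, sOp_sub, sOp_X_self, sOp_X_succ,
    sOp_X_of_ne (show i + 1 + 1 ≠ i by lia) (show i + 1 + 1 ≠ i + 1 by lia)] at hsB hstA
  rw [show sOp i A = A from sOp_rhoOp i P] at hsB
  rw [braidDenom]
  linear_combination
    (X (i + 1) - X (i + 2)) * (X i - X (i + 2)) * rhoOp_spec i B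
      + X i * (X i - X (i + 2)) * hBspec - X (i + 1) * (X (i + 1) - X (i + 2)) * hsB
      + X i * X (i + 1) * hAspec - X i * X (i + 2) * htA + X (i + 1) * X (i + 2) * hstA

theorem braidDenom_mul_rhoOp_right (i : ℕ) (P : Poly) :
    braidDenom i * rhoOp (i + 1) (rhoOp i (rhoOp (i + 1) P)) =
      X i ^ 2 * X (i + 1) * P - X i * X (i + 1) ^ 2 * sOp i P
        - X i ^ 2 * X (i + 2) * sOp (i + 1) P + X i * X (i + 2) ^ 2 * sOp (i + 1) (sOp i P)
        + X (i + 1) ^ 2 * X (i + 2) * sOp i (sOp (i + 1) P)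
        - X (i + 1) * X (i + 2) ^ 2 * sOp (i + 1) (sOp i (sOp (i + 1) P)) := by
  set A := rhoOp (i + 1) P with hA
  set B := rhoOp i A with hB
  have hAspec := rhoOp_spec (i + 1) P
  have hsA := congrArg (sOp i) hAspec
  have hBspec := rhoOp_spec i A
  have htB := congrArg (sOp (i + 1)) hBspec
  rw [← hA] at hAspec hsA
  rw [← hB] at hBspec htB
  simp only [sOp_mul, sOp_sub, sOp_X_succ,
    sOp_X_of_ne (show i + 1 + 1 ≠ i by lia) (show i + 1 + 1 ≠ i + 1 by lia)] at hsA
  have htsA := congrArg (sOp (i + 1)) hsA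
  simp only [sOp_mul, sOp_sub, sOp_X_self, sOp_X_succ,
    sOp_X_of_ne (show i ≠ i + 1 by lia) (show i ≠ i + 1 + 1 by lia)] at htB htsA
  rw [show sOp (i + 1) A = A from sOp_rhoOp (i + 1) P] at htB
  rw [braidDenom]
  linear_combination
    (X i - X (i + 1)) * (X i - X (i + 2)) * rhoOp_spec (i + 1) B
      + X (i + 1) * (X i - X (i + 2)) * hBspec - X (i + 2) * (X i - X (i + 1)) * htB
      + X i ^ 2 * hAspec - X (i + 1) ^ 2 * hsA + X (i + 2) ^ 2 * htsA

/-- The operator `ρ_i`, as an element of the monoid of self-maps of `Poly` under composition. -/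
def demazureOp (i : ℕ) : Function.End Poly := rhoOp i

theorem demazureOp_mul_apply (i : ℕ) (f : Function.End Poly) (P : Poly) :
    (demazureOp i * f) P = rhoOp i (f P) := rfl

theorem isBraided_demazureOp : IsBraided demazureOp where
  comm _ _ h := funext (rhoOp_comm h)
  braid i := by
    funext P
    change rhoOp i (rhoOp (i + 1) (rhoOp i P)) = rhoOp (i + 1) (rhoOp i (rhoOp (i + 1) P))
    apply mul_left_cancel₀ (braidDenom_ne_zero i)
    rw [braidDenom_mul_rhoOp_left, braidDenom_mul_rhoOp_right, sOp_braid]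

theorem applyOps_rhoOp_eq_prod (w : List ℕ) (P : Poly) :
    applyOps rhoOp w P = (w.map demazureOp).prod P := by
  induction w with
  | nil => rfl
  | cons i w ih => exact congrArg (rhoOp i) ih

theorem IsReducedWord.sOp_applyOps_rhoOp_of_longest {n : ℕ} {w : List ℕ}
    (hw : IsReducedWord n w (fun t => n + 1 - t)) (P : Poly) {i : ℕ} (hi : 1 ≤ i)
    (hin : i + 1 ≤ n) : sOp i (applyOps rhoOp w P) = applyOps rhoOp w P := by
  obtain ⟨u, -, -, -, hprod⟩ :=
    hw.isDescentWord.exchange isBraided_demazureOp (hw.isDescent_of_longest hi hin)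
  have hfactor : applyOps rhoOp w P = rhoOp i (applyOps rhoOp u P) := by
    rw [applyOps_rhoOp_eq_prod, applyOps_rhoOp_eq_prod, hprod, demazureOp_mul_apply]
  rw [hfactor, sOp_rhoOp]

end DemazureOperators

section Alternants

variable {R : Type*} [CommRing R]

/-- The alternant `a_{l + δ} = det (x_i ^ (l_j + δ_j))` with `δ = (n - 1, …, 1, 0)`; the entries of
`δ` are written with `Fin.rev`. -/
def alternant (x : ℕ → R) {n : ℕ} (l : Fin n → ℕ) : R :=
  Matrix.det (Matrix.of fun i j : Fin n => x i ^ (l j + j.rev))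

theorem alternant_zero_ne_zero [IsDomain R] {x : ℕ → R} (hx : Function.Injective x) (n : ℕ) :
    alternant x (0 : Fin n → ℕ) ≠ 0 := by
  have hvandermonde : alternant x (0 : Fin n → ℕ) =
      ((Matrix.vandermonde fun i : Fin n => x i).submatrix id Fin.revPerm).det := by
    rw [alternant]
    congr 1
    ext i j
    simp
  rw [hvandermonde, Matrix.det_permute']
  refine mul_ne_zero ?_ (Matrix.det_vandermonde_ne_zero_iff.2 (hx.comp Fin.val_injective))
  rcases Int.units_eq_one_or (Equiv.Perm.sign (Fin.revPerm (n := n))) with h | h <;> simp [h]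

theorem det_eq_of_forall_col_eq_smul_add_succ {n : ℕ} {A B : Matrix (Fin (n + 1)) (Fin (n + 1)) R}
    (c : Fin n → R) (hlast : ∀ i, A i (Fin.last n) = B i (Fin.last n))
    (hcol : ∀ i (j : Fin n), A i j.castSucc = B i j.castSucc + c j * A i j.succ) :
    A.det = B.det := by
  rw [← Matrix.det_submatrix_equiv_self Fin.revPerm A,
    ← Matrix.det_submatrix_equiv_self Fin.revPerm B]
  apply Matrix.det_eq_of_forall_col_eq_smul_add_pred fun j => c j.rev
  · simp [hlast]
  · intro i j
    simp [Fin.rev_succ, Fin.rev_castSucc, hcol]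

theorem det_of_sum_col {ι κ : Type*} [Fintype ι] [DecidableEq ι] (S : ι → Finset κ)
    (a : ι → ι → κ → R) :
    Matrix.det (Matrix.of fun i j => ∑ m ∈ S j, a i j m) =
      ∑ μ ∈ Fintype.piFinset S, Matrix.det (Matrix.of fun i j => a i j (μ j)) := by
  simp only [Matrix.det_apply, Matrix.of_apply, Finset.prod_univ_sum, Finset.smul_sum]
  exact Finset.sum_comm

theorem sub_mul_sum_Icc_pow_mul_pow (x y : R) {a b : ℕ} (hab : a ≤ b) (r : ℕ) :
    (x - y) * ∑ m ∈ Finset.Icc a b, y ^ (b - m) * x ^ (m + r) =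
      x ^ (b + (r + 1)) - y ^ (b + 1 - a) * x ^ (a + r) := by
  have hgeom := (Commute.all x y).mul_geom_sum₂_Ico (show a ≤ b + 1 by lia)
  rw [Finset.Ico_add_one_right_eq_Icc, Nat.add_sub_cancel] at hgeom
  have hterm (m : ℕ) : y ^ (b - m) * x ^ (m + r) = x ^ r * (x ^ m * y ^ (b - m)) := by ring
  simp only [hterm, ← Finset.mul_sum]
  linear_combination x ^ r * hgeom

/-- The weakly decreasing sequences `μ` with `l_0 ≥ μ_0 ≥ l_1 ≥ μ_1 ≥ ⋯ ≥ l_n`, for weakly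
decreasing `l`: the rows that can follow `l` in a Gelfand–Tsetlin pattern. -/
def interlacing {n : ℕ} (l : Fin (n + 1) → ℕ) : Finset (Fin n → ℕ) :=
  Fintype.piFinset fun j => Finset.Icc (l j.succ) (l j.castSucc)

theorem mem_interlacing {n : ℕ} {l : Fin (n + 1) → ℕ} {μ : Fin n → ℕ} :
    μ ∈ interlacing l ↔ ∀ j, l j.succ ≤ μ j ∧ μ j ≤ l j.castSucc := by
  simp only [interlacing, Fintype.mem_piFinset, Finset.mem_Icc]

theorem antitone_of_mem_interlacing {n : ℕ} {l : Fin (n + 1) → ℕ} {μ : Fin n → ℕ}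
    (hμ : μ ∈ interlacing l) : Antitone μ := by
  rw [mem_interlacing] at hμ
  have hl : Antitone l := Fin.antitone_iff_succ_le.2 fun j => (hμ j).1.trans (hμ j).2
  intro j k hjk
  rcases hjk.eq_or_lt with rfl | hlt
  · rfl
  · exact (hμ k).2.trans ((hl hlt).trans (hμ j).1)

theorem alternant_succ (x : ℕ → R) {n : ℕ} {l : Fin (n + 1) → ℕ} (hl : Antitone l) :
    alternant x l = x n ^ l (Fin.last n) * (∏ i : Fin n, (x i - x n)) *
      ∑ μ ∈ interlacing l, (∏ j, x n ^ (l j.castSucc - μ j)) * alternant x μ := by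
  let S (y : R) (j : Fin n) : R :=
    ∑ m ∈ Finset.Icc (l j.succ) (l j.castSucc), x n ^ (l j.castSucc - m) * y ^ (m + j.rev)
  let B : Matrix (Fin (n + 1)) (Fin (n + 1)) R := Matrix.of fun i =>
    Fin.lastCases (x i ^ l (Fin.last n)) fun j => (x i - x n) * S (x i) j
  have hB : alternant x l = B.det := by
    refine det_eq_of_forall_col_eq_smul_add_succ
      (fun j => x n ^ (l j.castSucc + 1 - l j.succ)) (by simp [B]) fun i j => ?_
    simp only [B, S, Matrix.of_apply, Fin.lastCases_castSucc, Fin.rev_castSucc, Fin.rev_succ,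
      Fin.val_succ, Fin.val_castSucc]
    rw [sub_mul_sum_Icc_pow_mul_pow _ _ (hl j.castSucc_lt_succ.le)]
    ring
  have hS : Matrix.det (Matrix.of fun i j : Fin n => S (x i) j) =
      ∑ μ ∈ interlacing l, (∏ j, x n ^ (l j.castSucc - μ j)) * alternant x μ :=
    (det_of_sum_col _ _).trans (Finset.sum_congr rfl fun μ _ => Matrix.det_mul_row _ _)
  have hminor : B.submatrix (Fin.last n).succAbove (Fin.last n).succAbove =
      Matrix.of fun i j : Fin n => (x i - x n) * Matrix.of (fun i j : Fin n => S (x i) j) i j := by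
    ext i j
    simp [B, Fin.succAbove_last]
  -- The last row of `B` vanishes off the diagonal.
  rw [hB, Matrix.det_succ_row B (Fin.last n), Fin.sum_univ_castSucc,
    Finset.sum_eq_zero fun j _ => by simp [B], zero_add, hminor, Matrix.det_mul_column, hS]
  simp [B, mul_assoc]

theorem alternant_zero_succ (x : ℕ → R) (n : ℕ) :
    alternant x (0 : Fin (n + 1) → ℕ) =
      (∏ i : Fin n, (x i - x n)) * alternant x (0 : Fin n → ℕ) := by
  have hinterlacing : interlacing (0 : Fin (n + 1) → ℕ) = {0} := by
    ext μ
    simp [mem_interlacing, funext_iff]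
  rw [alternant_succ x (l := 0) antitone_const, hinterlacing]
  simp

end Alternants

section Tableaux

variable {n : ℕ}

theorem InShape.left {lam : NPartition n} {j i : ℕ} (h : InShape lam (j + 1) i) (hj : 1 ≤ j) :
    InShape lam j i :=
  ⟨hj, h.2.1, h.2.2.1, j.le_succ.trans h.2.2.2⟩

theorem InShape.up {lam : NPartition n} {j i : ℕ} (h : InShape lam j (i + 1)) (hi : 1 ≤ i) :
    InShape lam j i :=
  ⟨h.1, hi, i.le_succ.trans h.2.2.1, h.2.2.2.trans (lam.antitone hi i.le_succ)⟩

/-- The set `T_λ` of semistandard tableaux of shape `λ` with entries in `[n]`, each normalized to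
vanish outside the shape. -/
def tableaux (lam : NPartition n) : Set (ℕ → ℕ → ℕ) := {T | IsSSYT lam T ∧ ZeroOutside lam T}

/-- The Schur polynomial `s_λ`, as a sum over semistandard tableaux. -/
def schur (lam : NPartition n) : Poly := ∑ᶠ T ∈ tableaux lam, weight lam T

/-- The row lengths of `λ`, indexed from zero. -/
def NPartition.rows (lam : NPartition n) (j : Fin n) : ℕ := lam.part (j + 1)

theorem NPartition.antitone_rows (lam : NPartition n) : Antitone lam.rows := fun _ _ h =>
  lam.antitone (Nat.le_add_left 1 _) (Nat.add_le_add_right h 1)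

/-- The partition with row lengths `μ`. Running maxima from below make this total; they do nothing
when `μ` is weakly decreasing. -/
def ofRows (μ : Fin n → ℕ) : NPartition n where
  part i := (Finset.univ.filter fun k : Fin n => i ≤ k + 1).sup μ
  antitone _ _ _ hij := Finset.sup_mono fun k hk => by
    simp only [Finset.mem_filter, Finset.mem_univ, true_and] at hk ⊢
    exact hij.trans hk
  outside i hi := by
    rw [Finset.filter_false_of_mem fun k _ => by lia, Finset.sup_empty, Nat.bot_eq_zero]

theorem rows_ofRows {μ : Fin n → ℕ} (hμ : Antitone μ) : (ofRows μ).rows = μ := by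
  funext j
  change (Finset.univ.filter fun k : Fin n => (j : ℕ) + 1 ≤ k + 1).sup μ = μ j
  refine le_antisymm (Finset.sup_le fun k hk => hμ ?_) (Finset.le_sup (f := μ) ?_)
  · simpa only [Finset.mem_filter_univ, add_le_add_iff_right, Fin.val_fin_le] using hk
  · exact (Finset.mem_filter_univ j).2 le_rfl

theorem part_interlaces {lam : NPartition (n + 1)} {mu : NPartition n}
    (h : mu.rows ∈ interlacing lam.rows) {i : ℕ} (hi : 1 ≤ i) (hin : i ≤ n) :
    lam.part (i + 1) ≤ mu.part i ∧ mu.part i ≤ lam.part i := by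
  obtain ⟨k, rfl⟩ := Nat.exists_eq_add_of_le' hi
  exact mem_interlacing.1 h ⟨k, hin⟩

theorem InShape.of_interlacing {lam : NPartition (n + 1)} {mu : NPartition n}
    (h : mu.rows ∈ interlacing lam.rows) {j i : ℕ} (hs : InShape mu j i) : InShape lam j i :=
  ⟨hs.1, hs.2.1, hs.2.2.1.trans n.le_succ, hs.2.2.2.trans (part_interlaces h hs.2.1 hs.2.2.1).2⟩

section Extension

variable {lam : NPartition (n + 1)} {mu : NPartition n} {T : ℕ → ℕ → ℕ}

/-- Extend a filling of shape `mu` to a filling of shape `lam` by the entries `n + 1`. -/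
def extend (lam : NPartition (n + 1)) (mu : NPartition n) (T : ℕ → ℕ → ℕ) (j i : ℕ) : ℕ :=
  if InShape mu j i then T j i else if InShape lam j i then n + 1 else 0

theorem extend_of_inShape {j i : ℕ} (h : InShape mu j i) : extend lam mu T j i = T j i := if_pos h

theorem extend_of_not_inShape {j i : ℕ} (hmu : ¬ InShape mu j i) (hlam : InShape lam j i) :
    extend lam mu T j i = n + 1 := by
  rw [extend, if_neg hmu, if_pos hlam]

theorem extend_le (hT : IsSSYT mu T) (j i : ℕ) : extend lam mu T j i ≤ n + 1 := by
  unfold extend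
  split_ifs with hmu
  · exact (hT.1 j i hmu).2.trans n.le_succ
  · rfl
  · exact Nat.zero_le _

theorem zeroOutside_extend (h : mu.rows ∈ interlacing lam.rows) :
    ZeroOutside lam (extend lam mu T) := fun _ _ hs => by
  rw [extend, if_neg fun hmu => hs (hmu.of_interlacing h), if_neg hs]

theorem extend_mem_tableaux (h : mu.rows ∈ interlacing lam.rows) (hT : IsSSYT mu T) :
    extend lam mu T ∈ tableaux lam := by
  have hzero := zeroOutside_extend (T := T) h
  have hle := extend_le (lam := lam) hT
  obtain ⟨hrange, hrow, hcol⟩ := hT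
  refine ⟨⟨fun j i hs => ⟨?_, hle j i⟩, fun j i hs => ?_, fun j i hs => ?_⟩, hzero⟩
  · by_cases hmu : InShape mu j i
    · exact (extend_of_inShape hmu).symm ▸ (hrange j i hmu).1
    · exact (extend_of_not_inShape hmu hs).symm ▸ n.succ_pos
  · rcases j.eq_zero_or_pos with rfl | hj
    · exact (hzero 0 i fun h0 => absurd h0.1 (by lia)).trans_le (Nat.zero_le _)
    by_cases hmu : InShape mu (j + 1) i
    · rw [extend_of_inShape hmu, extend_of_inShape (hmu.left hj)]
      exact hrow j i hmu
    · exact (hle j i).trans_eq (extend_of_not_inShape hmu hs).symm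
  · by_cases hmu : InShape mu j (i + 1)
    · rcases i.eq_zero_or_pos with rfl | hi
      · rw [hzero j 0 fun h0 => absurd h0.2.1 (by lia), extend_of_inShape hmu]
        exact (hrange j 1 hmu).1
      · rw [extend_of_inShape hmu, extend_of_inShape (hmu.up hi)]
        exact hcol j i hmu
    · rw [extend_of_not_inShape hmu hs, Nat.lt_succ_iff]
      rcases i.eq_zero_or_pos with rfl | hi
      · exact (hzero j 0 fun h0 => absurd h0.2.1 (by lia)).trans_le (Nat.zero_le _)
      · have hin : i ≤ n := Nat.le_of_succ_le_succ hs.2.2.1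
        have hmu' : InShape mu j i :=
          ⟨hs.1, hi, hin, hs.2.2.2.trans (part_interlaces h hi hin).1⟩
        exact (extend_of_inShape hmu').trans_le (hrange j i hmu').2

theorem inShape_iff_extend_mem_Icc (hT : IsSSYT mu T) (j i : ℕ) :
    InShape mu j i ↔ 1 ≤ extend lam mu T j i ∧ extend lam mu T j i ≤ n := by
  refine ⟨fun hs => extend_of_inShape hs ▸ hT.1 j i hs, fun h => ?_⟩
  by_contra hs
  rw [extend, if_neg hs] at h
  split_ifs at h <;> lia

theorem extend_injOn : Set.InjOn (extend lam mu) (tableaux mu) := by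
  intro T hT T' hT' h
  funext j i
  by_cases hs : InShape mu j i
  · simpa only [extend_of_inShape hs] using congrFun₂ h j i
  · rw [hT.2 j i hs, hT'.2 j i hs]

end Extension

theorem rows_eq_of_inShape_iff {mu mu' : NPartition n}
    (h : ∀ j i, InShape mu j i ↔ InShape mu' j i) : mu.rows = mu'.rows := by
  have hle {a b : NPartition n} (hab : ∀ j i, InShape a j i → InShape b j i) :
      a.rows ≤ b.rows := fun k => by
    rcases (a.rows k).eq_zero_or_pos with h0 | hpos
    · exact h0.trans_le (Nat.zero_le _)
    · exact (hab _ (k + 1) ⟨hpos, by lia, k.isLt, le_rfl⟩).2.2.2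
  exact le_antisymm (hle fun j i => (h j i).1) (hle fun j i => (h j i).2)

theorem pairwiseDisjoint_extend_image (lam : NPartition (n + 1)) :
    (interlacing lam.rows : Set (Fin n → ℕ)).PairwiseDisjoint
      fun μ => extend lam (ofRows μ) '' tableaux (ofRows μ) := by
  intro μ hμ ν hν hne
  refine Set.disjoint_left.2 ?_
  rintro _ ⟨T, hT, rfl⟩ ⟨T', hT', heq⟩
  refine hne ?_
  rw [← rows_ofRows (antitone_of_mem_interlacing hμ),
    ← rows_ofRows (antitone_of_mem_interlacing hν)]
  refine rows_eq_of_inShape_iff fun j i => ?_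
  rw [inShape_iff_extend_mem_Icc (lam := lam) hT.1,
    inShape_iff_extend_mem_Icc (lam := lam) hT'.1, heq]

section Restriction

theorem apply_le_apply_of_row {lam : NPartition n} {T : ℕ → ℕ → ℕ} (hT : IsSSYT lam T)
    {i a b : ℕ} (hab : a ≤ b) (hb : InShape lam b i) : T a i ≤ T b i := by
  induction b, hab using Nat.le_induction with
  | base => rfl
  | succ b hab ih =>
    refine le_trans ?_ (hT.2.1 b i hb)
    rcases b.eq_zero_or_pos with rfl | hpos
    · rw [Nat.le_zero.1 hab]
    · exact ih (hb.left hpos)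

theorem row_le_apply {lam : NPartition n} {T : ℕ → ℕ → ℕ} (hT : IsSSYT lam T) {j i : ℕ}
    (hs : InShape lam j i) : i ≤ T j i := by
  induction i with
  | zero => exact Nat.zero_le _
  | succ i ih =>
    rcases i.eq_zero_or_pos with rfl | hi
    · exact (hT.1 j 1 hs).1
    · exact (ih (hs.up hi)).trans_lt (hT.2.2 j i hs)

variable {lam : NPartition (n + 1)} {T : ℕ → ℕ → ℕ}

/-- The row lengths of the subtableau of entries at most `n`. -/
def innerRows (lam : NPartition (n + 1)) (T : ℕ → ℕ → ℕ) (k : Fin n) : ℕ :=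
  Nat.findGreatest (fun j => T j (k + 1) ≤ n) (lam.part (k + 1))

theorem le_innerRows_iff (hT : T ∈ tableaux lam) {j : ℕ} {k : Fin n}
    (hs : InShape lam j (k + 1)) : j ≤ innerRows lam T k ↔ T j (k + 1) ≤ n := by
  refine ⟨fun hj => ?_, fun hj => Nat.le_findGreatest hs.2.2.2 hj⟩
  have hzero : T 0 (k + 1) ≤ n := (hT.2 0 _ fun h0 => absurd h0.1 (by lia)).trans_le (Nat.zero_le n)
  have hspec : T (innerRows lam T k) (k + 1) ≤ n :=
    Nat.findGreatest_spec (P := fun j => T j (k + 1) ≤ n) (Nat.zero_le _) hzero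
  exact (apply_le_apply_of_row hT.1 hj
    ⟨hs.1.trans hj, hs.2.1, hs.2.2.1, Nat.findGreatest_le _⟩).trans hspec

theorem innerRows_mem_interlacing (hT : T ∈ tableaux lam) :
    innerRows lam T ∈ interlacing lam.rows := by
  refine mem_interlacing.2 fun k => ⟨?_, Nat.findGreatest_le _⟩
  rcases (lam.rows k.succ).eq_zero_or_pos with h0 | hpos
  · exact h0.trans_le (Nat.zero_le _)
  · have hs : InShape lam (lam.rows k.succ) (k + 1 + 1) :=
      ⟨hpos, by lia, Nat.succ_le_succ k.isLt, le_rfl⟩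
    rw [le_innerRows_iff hT (hs.up (by lia)), ← Nat.lt_succ_iff]
    exact (hT.1.2.2 _ _ hs).trans_le (hT.1.1 _ _ hs).2

theorem inShape_ofRows_innerRows_iff (hT : T ∈ tableaux lam) {j i : ℕ} :
    InShape (ofRows (innerRows lam T)) j i ↔ InShape lam j i ∧ T j i ≤ n := by
  have hinter := innerRows_mem_interlacing hT
  have hrows := rows_ofRows (antitone_of_mem_interlacing hinter)
  have hpart (k : Fin n) : (ofRows (innerRows lam T)).part (k + 1) = innerRows lam T k :=
    congrFun hrows k
  constructor
  · intro hs
    have hlam := hs.of_interlacing (hrows.symm ▸ hinter)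
    obtain ⟨k, rfl⟩ := Nat.exists_eq_add_of_le' hs.2.1
    exact ⟨hlam, (le_innerRows_iff hT (k := ⟨k, hs.2.2.1⟩) hlam).1
      (hs.2.2.2.trans_eq (hpart ⟨k, hs.2.2.1⟩))⟩
  · rintro ⟨hs, hle⟩
    have hin : i ≤ n := (row_le_apply hT.1 hs).trans hle
    obtain ⟨k, rfl⟩ := Nat.exists_eq_add_of_le' hs.2.1
    exact ⟨hs.1, hs.2.1, hin, ((le_innerRows_iff hT (k := ⟨k, hin⟩) hs).2 hle).trans_eq
      (hpart ⟨k, hin⟩).symm⟩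

theorem exists_extend_eq (hT : T ∈ tableaux lam) :
    ∃ T' ∈ tableaux (ofRows (innerRows lam T)),
      extend lam (ofRows (innerRows lam T)) T' = T := by
  set mu := ofRows (innerRows lam T)
  have hshape (j i : ℕ) : InShape mu j i ↔ InShape lam j i ∧ T j i ≤ n :=
    inShape_ofRows_innerRows_iff hT
  obtain ⟨hrange, hrow, hcol⟩ := hT.1
  let T' (j i : ℕ) : ℕ := if InShape mu j i then T j i else 0
  have hle (j i : ℕ) : T' j i ≤ T j i := by
    simp only [T']
    split_ifs <;> lia
  have heq {j i : ℕ} (hs : InShape mu j i) : T' j i = T j i := if_pos hs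
  refine ⟨T', ⟨⟨fun j i hs => ?_, fun j i hs => ?_, fun j i hs => ?_⟩, fun j i hs => if_neg hs⟩, ?_⟩
  · rw [heq hs]
    exact ⟨(hrange j i ((hshape j i).1 hs).1).1, ((hshape j i).1 hs).2⟩
  · exact ((hle j i).trans (hrow j i ((hshape _ i).1 hs).1)).trans_eq (heq hs).symm
  · exact ((hle j i).trans_lt (hcol j i ((hshape j _).1 hs).1)).trans_eq (heq hs).symm
  · funext j i
    by_cases hmu : InShape mu j i
    · rw [extend_of_inShape hmu, heq hmu]
    by_cases hs : InShape lam j i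
    · have hlt : n < T j i := not_le.1 fun hle => hmu ((hshape j i).2 ⟨hs, hle⟩)
      exact (extend_of_not_inShape hmu hs).trans (le_antisymm hlt (hrange j i hs).2)
    · rw [extend, if_neg hmu, if_neg hs, hT.2 j i hs]

end Restriction

theorem tableaux_succ (lam : NPartition (n + 1)) :
    tableaux lam = ⋃ μ ∈ (interlacing lam.rows : Set (Fin n → ℕ)),
      extend lam (ofRows μ) '' tableaux (ofRows μ) := by
  ext T
  simp only [Set.mem_iUnion₂, Set.mem_image]
  constructor
  · exact fun hT => ⟨_, innerRows_mem_interlacing hT, exists_extend_eq hT⟩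
  · rintro ⟨μ, hμ, T', hT', rfl⟩
    exact extend_mem_tableaux ((rows_ofRows (antitone_of_mem_interlacing hμ)).symm ▸ hμ) hT'.1

theorem tableaux_zero (lam : NPartition 0) : tableaux lam = {0} := by
  have hshape (j i : ℕ) : ¬ InShape lam j i := fun h => by
    have := h.2.1.trans h.2.2.1
    lia
  refine Set.eq_singleton_iff_unique_mem.2 ⟨?_, fun T hT => ?_⟩
  · exact ⟨⟨fun j i h => absurd h (hshape _ _), fun j i h => absurd h (hshape _ _),
      fun j i h => absurd h (hshape _ _)⟩, fun _ _ _ => rfl⟩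
  · funext j i
    exact hT.2 j i (hshape j i)

theorem tableaux_finite (lam : NPartition n) : (tableaux lam).Finite := by
  induction n with
  | zero => exact tableaux_zero lam ▸ Set.finite_singleton 0
  | succ n ih =>
    rw [tableaux_succ]
    exact (Finset.finite_toSet _).biUnion fun μ _ => (ih (ofRows μ)).image _

theorem prod_Icc_one_eq_prod_fin {M : Type*} [CommMonoid M] (n : ℕ) (f : ℕ → M) :
    ∏ i ∈ Finset.Icc 1 n, f i = ∏ k : Fin n, f (k + 1) := by
  rw [Fin.prod_univ_eq_prod_range (fun k => f (k + 1)) n, Finset.range_eq_Ico,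
    Finset.prod_Ico_add' f 0 n 1, zero_add, Finset.Ico_add_one_right_eq_Icc]

theorem weight_eq_prod_rows (lam : NPartition n) (T : ℕ → ℕ → ℕ) :
    weight lam T = ∏ k : Fin n, ∏ j ∈ Finset.Ioc 0 (lam.rows k), X (T j (k + 1)) := by
  refine Eq.trans ?_ (prod_Icc_one_eq_prod_fin n fun i =>
    ∏ j ∈ Finset.Ioc 0 (lam.part i), (X (T j i) : Poly))
  rw [weight, boxes, Finset.prod_filter, Finset.prod_product_right]
  refine Finset.prod_congr rfl fun i hi => ?_
  have hle : lam.part i ≤ lam.part 1 := lam.antitone le_rfl (Finset.mem_Icc.1 hi).1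
  rw [← Finset.prod_filter]
  refine Finset.prod_congr ?_ fun _ _ => rfl
  ext j
  simp only [Finset.mem_filter, Finset.mem_Icc, Finset.mem_Ioc]
  lia

theorem prod_X_extend_Ioc {lam : NPartition (n + 1)} {mu : NPartition n}
    (T : ℕ → ℕ → ℕ) {k a b : ℕ} (hk : k < n + 1)
    (hmu : ∀ j, a < j → ¬ InShape mu j (k + 1)) (hb : b ≤ lam.part (k + 1)) :
    ∏ j ∈ Finset.Ioc a b, (X (extend lam mu T j (k + 1)) : Poly) = X (n + 1) ^ (b - a) := by
  rw [← Nat.card_Ioc]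
  refine Finset.prod_eq_pow_card fun j hj => ?_
  obtain ⟨haj, hjb⟩ := Finset.mem_Ioc.1 hj
  rw [extend_of_not_inShape (hmu j haj) ⟨by lia, by lia, hk, hjb.trans hb⟩]

theorem weight_extend {lam : NPartition (n + 1)} {mu : NPartition n}
    (h : mu.rows ∈ interlacing lam.rows) (T : ℕ → ℕ → ℕ) :
    weight lam (extend lam mu T) = X (n + 1) ^ lam.rows (Fin.last n) *
      ((∏ k : Fin n, X (n + 1) ^ (lam.rows k.castSucc - mu.rows k)) * weight mu T) := by
  rw [weight_eq_prod_rows, weight_eq_prod_rows, Fin.prod_univ_castSucc, mul_comm,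
    ← Finset.prod_mul_distrib]
  congr 1
  · exact prod_X_extend_Ioc T n.lt_succ_self
      (fun j _ hs => absurd hs.2.2.1 (by simp)) le_rfl
  · refine Finset.prod_congr rfl fun k _ => ?_
    rw [← Finset.prod_Ioc_consecutive _ (Nat.zero_le _) (mem_interlacing.1 h k).2, mul_comm]
    congr 1
    · exact prod_X_extend_Ioc T k.castSucc.isLt (fun j hj hs => hj.not_ge hs.2.2.2) le_rfl
    · refine Finset.prod_congr rfl fun j hj => ?_
      obtain ⟨hj0, hj⟩ := Finset.mem_Ioc.1 hj
      exact congrArg X (extend_of_inShape ⟨hj0, by lia, k.isLt, hj⟩)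

theorem schur_zero (lam : NPartition 0) : schur lam = 1 := by
  rw [schur, tableaux_zero, finsum_mem_singleton, weight_eq_prod_rows, Fin.prod_univ_zero]

theorem schur_succ (lam : NPartition (n + 1)) :
    schur lam = X (n + 1) ^ lam.rows (Fin.last n) * ∑ μ ∈ interlacing lam.rows,
      (∏ k : Fin n, X (n + 1) ^ (lam.rows k.castSucc - μ k)) * schur (ofRows μ) := by
  rw [schur, tableaux_succ, finsum_mem_biUnion (pairwiseDisjoint_extend_image lam)
    (Finset.finite_toSet _) fun μ _ => (tableaux_finite _).image _, finsum_mem_coe_finset,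
    Finset.mul_sum]
  refine Finset.sum_congr rfl fun μ hμ => ?_
  have hrows : (ofRows μ).rows = μ := rows_ofRows (antitone_of_mem_interlacing hμ)
  rw [finsum_mem_image extend_injOn, schur, mul_finsum_mem, mul_finsum_mem]
  refine finsum_mem_congr rfl fun T _ => ?_
  rw [weight_extend (hrows.symm ▸ hμ), hrows]

theorem alternant_rows_eq_mul_schur (lam : NPartition n) :
    alternant (fun k => (X (k + 1) : Poly)) lam.rows =
      alternant (fun k => X (k + 1)) (0 : Fin n → ℕ) * schur lam := by
  induction n with
  | zero => rw [schur_zero, mul_one, Subsingleton.elim lam.rows 0]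
  | succ n ih =>
    have hsum : ∑ μ ∈ interlacing lam.rows,
          (∏ k : Fin n, (X (n + 1) : Poly) ^ (lam.rows k.castSucc - μ k)) *
            alternant (fun k => X (k + 1)) μ =
        alternant (fun k => X (k + 1)) (0 : Fin n → ℕ) * ∑ μ ∈ interlacing lam.rows,
          (∏ k : Fin n, X (n + 1) ^ (lam.rows k.castSucc - μ k)) * schur (ofRows μ) := by
      rw [Finset.mul_sum]
      refine Finset.sum_congr rfl fun μ hμ => ?_
      have halt := ih (ofRows μ)
      rw [rows_ofRows (antitone_of_mem_interlacing hμ)] at halt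
      rw [halt, mul_left_comm]
    rw [alternant_succ _ lam.antitone_rows, hsum, alternant_zero_succ, schur_succ]
    ring

end Tableaux

section Antisymmetrizer

variable {n : ℕ}

/-- The embedding of `S_n` into the permutations of the variable indices, with `k : Fin n` standing
for the variable `x_{k+1}`. -/
def permIndices (n : ℕ) : Equiv.Perm (Fin n) →* Equiv.Perm ℕ :=
  Equiv.Perm.viaEmbeddingHom (Fin.valEmbedding.trans (addRightEmbedding 1))

theorem permIndices_apply_succ (σ : Equiv.Perm (Fin n)) (k : Fin n) :
    permIndices n σ (k + 1) = σ k + 1 :=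
  Equiv.Perm.viaEmbedding_apply σ (Fin.valEmbedding.trans (addRightEmbedding 1)) k

theorem permIndices_swap (a b : Fin n) :
    permIndices n (Equiv.swap a b) = Equiv.swap (a + 1 : ℕ) (b + 1) := by
  have hinj : Function.Injective fun k : Fin n => (k : ℕ) + 1 :=
    (add_left_injective 1).comp Fin.val_injective
  ext k
  by_cases hk : k ∈ Set.range fun k : Fin n => (k : ℕ) + 1
  · obtain ⟨k, rfl⟩ := hk
    exact (permIndices_apply_succ _ k).trans (hinj.map_swap a b k)
  · rw [Equiv.swap_apply_of_ne_of_ne (fun h => hk ⟨a, h.symm⟩) (fun h => hk ⟨b, h.symm⟩)]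
    exact Equiv.Perm.viaEmbedding_apply_of_notMem _ _ k hk

theorem rename_permIndices_mul (σ τ : Equiv.Perm (Fin n)) (P : Poly) :
    rename (permIndices n (σ * τ)) P = rename (permIndices n σ) (rename (permIndices n τ) P) := by
  rw [rename_rename, map_mul, Equiv.Perm.coe_mul]

theorem rename_permIndices_eq_self {P : Poly} (hP : ∀ i, 1 ≤ i → i + 1 ≤ n → sOp i P = P)
    (σ : Equiv.Perm (Fin n)) : rename (permIndices n σ) P = P := by
  have hone : rename (permIndices n 1) P = P := by rw [map_one, Equiv.Perm.coe_one, rename_id_apply]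
  cases n with
  | zero => rw [Subsingleton.elim σ 1, hone]
  | succ n =>
    have hσ : σ ∈ Submonoid.closure
        (Set.range fun i : Fin n => Equiv.swap i.castSucc i.succ) :=
      Equiv.Perm.mclosure_swap_castSucc_succ n ▸ Submonoid.mem_top σ
    induction hσ using Submonoid.closure_induction with
    | mem _ hs =>
      obtain ⟨i, rfl⟩ := hs
      rw [permIndices_swap]
      exact hP (i + 1) (Nat.le_add_left 1 i) (Nat.succ_le_succ i.isLt)
    | one => exact hone
    | mul σ τ _ _ hσ hτ => rw [rename_permIndices_mul, hτ, hσ]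

/-- The antisymmetrization `∑ σ ∈ S_n, sign σ • σ P`. -/
def antisymmetrize (n : ℕ) (P : Poly) : Poly :=
  ∑ σ : Equiv.Perm (Fin n), Equiv.Perm.sign σ • rename (permIndices n σ) P

theorem antisymmetrize_add (P Q : Poly) :
    antisymmetrize n (P + Q) = antisymmetrize n P + antisymmetrize n Q := by
  simp only [antisymmetrize, map_add, smul_add, Finset.sum_add_distrib]

theorem antisymmetrize_mul_of_symmetric {F : Poly}
    (hF : ∀ i, 1 ≤ i → i + 1 ≤ n → sOp i F = F) (P : Poly) :
    antisymmetrize n (P * F) = antisymmetrize n P * F := by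
  simp only [antisymmetrize, map_mul, rename_permIndices_eq_self hF, Finset.sum_mul,
    smul_mul_assoc]

theorem antisymmetrize_rename (τ : Equiv.Perm (Fin n)) (P : Poly) :
    antisymmetrize n (rename (permIndices n τ) P) = Equiv.Perm.sign τ • antisymmetrize n P := by
  rw [antisymmetrize, antisymmetrize, Finset.smul_sum, ← Equiv.sum_comp (Equiv.mulRight τ)
    fun σ => Equiv.Perm.sign τ • Equiv.Perm.sign σ • rename (permIndices n σ) P]
  refine Finset.sum_congr rfl fun σ _ => ?_
  rw [Equiv.coe_mulRight, rename_permIndices_mul, smul_smul, map_mul, mul_comm, mul_assoc,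
    Int.units_mul_self, mul_one]

theorem antisymmetrize_sOp {i : ℕ} (hi : 1 ≤ i) (hin : i + 1 ≤ n) (P : Poly) :
    antisymmetrize n (sOp i P) = -antisymmetrize n P := by
  obtain ⟨k, rfl⟩ := Nat.exists_eq_add_of_le' hi
  let a : Fin n := ⟨k, by lia⟩
  let b : Fin n := ⟨k + 1, hin⟩
  have hab : a ≠ b := fun h => absurd (congrArg Fin.val h) k.lt_succ_self.ne
  have hswap : sOp (k + 1) P = rename (permIndices n (Equiv.swap a b)) P := by
    rw [permIndices_swap, sOp]
  rw [hswap, antisymmetrize_rename, Equiv.Perm.sign_swap hab, Units.neg_smul, one_smul]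

theorem antisymmetrize_eq_zero {i : ℕ} (hi : 1 ≤ i) (hin : i + 1 ≤ n) {P : Poly}
    (hP : sOp i P = P) : antisymmetrize n P = 0 := by
  have h := antisymmetrize_sOp hi hin P
  rwa [hP, self_eq_neg] at h

theorem antisymmetrize_prod_X_pow (l : Fin n → ℕ) :
    antisymmetrize n (∏ k : Fin n, X (k + 1 : ℕ) ^ (l k + k.rev)) =
      alternant (fun k => X (k + 1)) l := by
  simp only [antisymmetrize, alternant, Matrix.det_apply, map_prod, map_pow, rename_X,
    permIndices_apply_succ, Matrix.of_apply]

/-- The monomial `x^δ = x_1^{n-1} x_2^{n-2} ⋯ x_n^0`. -/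
def staircase (n : ℕ) : Poly := ∏ k : Fin n, X (k + 1 : ℕ) ^ (k.rev : ℕ)

theorem antisymmetrize_staircase :
    antisymmetrize n (staircase n) = alternant (fun k => X (k + 1)) (0 : Fin n → ℕ) := by
  simpa only [Pi.zero_apply, zero_add, staircase] using antisymmetrize_prod_X_pow (0 : Fin n → ℕ)

theorem antisymmetrize_staircase_mul_lamMonomial (lam : NPartition n) :
    antisymmetrize n (staircase n * lamMonomial lam) =
      alternant (fun k => X (k + 1)) lam.rows := by
  rw [← antisymmetrize_prod_X_pow, staircase, lamMonomial, prod_Icc_one_eq_prod_fin,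
    ← Finset.prod_mul_distrib]
  simp only [← pow_add, add_comm, NPartition.rows]

theorem sOp_staircase_mul_X {i : ℕ} (hi : 1 ≤ i) (hin : i + 1 ≤ n) :
    sOp i (staircase n * X (i + 1)) = staircase n * X (i + 1) := by
  obtain ⟨k, rfl⟩ := Nat.exists_eq_add_of_le' hi
  let a : Fin n := ⟨k, by lia⟩
  let b : Fin n := ⟨k + 1, hin⟩
  have hab : a ≠ b := fun h => absurd (congrArg Fin.val h) k.lt_succ_self.ne
  have hrev : (a.rev : ℕ) = b.rev + 1 := by simp only [Fin.val_rev, a, b]; lia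
  let rest : Poly := ∏ j ∈ ({a, b}ᶜ : Finset (Fin n)), X (j + 1 : ℕ) ^ (j.rev : ℕ)
  have hrest : sOp (k + 1) rest = rest := by
    rw [sOp_prod]
    refine Finset.prod_congr rfl fun j hj => ?_
    simp only [Finset.mem_compl, Finset.mem_insert, Finset.mem_singleton, not_or, Fin.ext_iff,
      a, b] at hj
    rw [sOp_pow, sOp_X_of_ne (by lia) (by lia)]
  have hprod : staircase n * X (k + 1 + 1) =
      (X (k + 1) * X (k + 1 + 1)) ^ (a.rev : ℕ) * rest := by
    rw [staircase, ← Finset.prod_mul_prod_compl {a, b}, Finset.prod_pair hab, hrev]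
    simp only [rest, a, b]
    ring
  have hpair : sOp (k + 1) ((X (k + 1) * X (k + 1 + 1)) ^ (a.rev : ℕ)) =
      (X (k + 1) * X (k + 1 + 1)) ^ (a.rev : ℕ) := by
    rw [sOp_pow, sOp_mul, sOp_X_self, sOp_X_succ, mul_comm]
  rw [hprod, sOp_mul, hpair, hrest]

theorem antisymmetrize_staircase_mul_rhoOp {i : ℕ} (hi : 1 ≤ i) (hin : i + 1 ≤ n) (P : Poly) :
    antisymmetrize n (staircase n * rhoOp i P) = antisymmetrize n (staircase n * P) := by
  obtain ⟨Q, hQ, hrho⟩ := exists_rhoOp_eq_add i P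
  have hzero : antisymmetrize n (staircase n * X (i + 1) * Q) = 0 :=
    antisymmetrize_eq_zero hi hin (by rw [sOp_mul, sOp_staircase_mul_X hi hin, hQ])
  rw [hrho, mul_add, ← mul_assoc, antisymmetrize_add, hzero, add_zero]

theorem antisymmetrize_staircase_mul_applyOps_rhoOp {w : List ℕ}
    (hw : ∀ i ∈ w, 1 ≤ i ∧ i + 1 ≤ n) (P : Poly) :
    antisymmetrize n (staircase n * applyOps rhoOp w P) = antisymmetrize n (staircase n * P) := by
  induction w with
  | nil => rfl
  | cons i w ih =>
    obtain ⟨⟨hi, hin⟩, hw⟩ := List.forall_mem_cons.1 hw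
    exact (antisymmetrize_staircase_mul_rhoOp hi hin _).trans (ih hw)

theorem antisymmetrize_staircase_ne_zero : antisymmetrize n (staircase n) ≠ 0 :=
  antisymmetrize_staircase.trans_ne
    (alternant_zero_ne_zero ((X_injective (σ := ℕ) (R := ℚ)).comp (add_left_injective 1)) n)

end Antisymmetrizer

end KeyPoly

namespace KeyPoly

/-- For any reduced word for the longest permutation
`τ_0 = (n, n-1, …, 1)`, the Demazure polynomial `d_λ(τ_0;x)` equals the Schur
polynomial `s_λ(x) = Σ_{T ∈ T_λ} x^T`. -/
theorem demazure_longest_eq_schur (n : ℕ) (hn : 1 ≤ n) (lam : NPartition n)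
    (w : List ℕ) (hw : IsReducedWord n w (fun t => n + 1 - t)) :
    applyOps rhoOp w (lamMonomial lam) =
      ∑ᶠ T ∈ {T : ℕ → ℕ → ℕ | IsSSYT lam T ∧ ZeroOutside lam T},
        weight lam T := by
  change _ = schur lam
  refine mul_left_cancel₀ (antisymmetrize_staircase_ne_zero (n := n)) ?_
  calc antisymmetrize n (staircase n) * applyOps rhoOp w (lamMonomial lam)
      = antisymmetrize n (staircase n * applyOps rhoOp w (lamMonomial lam)) :=
        (antisymmetrize_mul_of_symmetric
          (fun _ => hw.sOp_applyOps_rhoOp_of_longest (lamMonomial lam)) _).symm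
    _ = antisymmetrize n (staircase n * lamMonomial lam) :=
        antisymmetrize_staircase_mul_applyOps_rhoOp hw.1.1 _
    _ = antisymmetrize n (staircase n) * schur lam := by
        rw [antisymmetrize_staircase_mul_lamMonomial, alternant_rows_eq_mul_schur,
          antisymmetrize_staircase]

end KeyPoly
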